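/- arXiv:1303.4448 — 4 statements merged into one kernel-verified Lean document; each statement's English description precedes it below -/
import Mathlib

section
/- For all N-bit binary numbers x and y, the (N−1)-truncated addition coincides with ordinary addition modulo 2^N: x +_{N−1} y ≡ x + y (mod 2^N). -/
/-- The `i`-th binary digit of `x`. -/
def bitd (x i : ℕ) : ℕ := (x / 2 ^ i) % 2

open Classical in
/-- The `m`-truncated carry bit at position `i`: it is 1 iff there is
`i - m ≤ j < i` with `(x_j, y_j) = (1,1)` and `x_k + y_k = 1` for all `j < k < i`. -/
noncomputable def tcarry (m x y i : ℕ) : ℕ :=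
  if ∃ j, i - m ≤ j ∧ j < i ∧ bitd x j = 1 ∧ bitd y j = 1 ∧
      (∀ k, j < k → k < i → bitd x k + bitd y k = 1) then 1 else 0

/-- The `m`-truncated addition of `N`-bit numbers: the bitwise xor of `x`, `y`
and the truncated carry array. -/
noncomputable def tadd (N m x y : ℕ) : ℕ :=
  ∑ i ∈ Finset.range N, ((bitd x i + bitd y i + tcarry m x y i) % 2) * 2 ^ i

/-!
Put `c_i = ⌊(x mod 2^i + y mod 2^i) / 2^i⌋`, the carry into position `i` of schoolbook addition.
Both `c` and the truncated carries satisfy a ripple-carry recursion: a carry into position `i + 1`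
is either generated at position `i`, or arrives at position `i` and is propagated by it. For the
truncated carries the recursion raises the truncation length along with the position, so the two
agree at every position `i ≤ m`. Hence, when `N ≤ m + 1`, the digits of the `m`-truncated sum below
position `N` are those of `x + y`.
-/

lemma bitd_lt_two (x i : ℕ) : bitd x i < 2 := Nat.mod_lt _ two_pos

lemma mod_two_pow_succ_eq_add_bitd (x n : ℕ) : x % 2 ^ (n + 1) = x % 2 ^ n + 2 ^ n * bitd x n :=
  Nat.mod_pow_succ

lemma sum_bitd_mul_two_pow (x n : ℕ) : ∑ i ∈ Finset.range n, bitd x i * 2 ^ i = x % 2 ^ n := by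
  induction n with
  | zero => rw [Finset.sum_range_zero, pow_zero, Nat.mod_one]
  | succ n ih => rw [Finset.sum_range_succ, ih, mod_two_pow_succ_eq_add_bitd, mul_comm]

/-- The carry into position `i` in the full addition of `x` and `y`, read off arithmetically from
the parts of `x` and `y` below position `i`; its value is `0` or `1`. -/
def carry (x y i : ℕ) : ℕ := (x % 2 ^ i + y % 2 ^ i) / 2 ^ i

lemma carry_zero (x y : ℕ) : carry x y 0 = 0 := by
  simp [carry, Nat.mod_one]

lemma carry_succ (x y i : ℕ) :
    carry x y (i + 1) = (bitd x i + bitd y i + carry x y i) / 2 := by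
  have hsplit : x % 2 ^ (i + 1) + y % 2 ^ (i + 1) =
      x % 2 ^ i + y % 2 ^ i + 2 ^ i * (bitd x i + bitd y i) := by
    rw [mod_two_pow_succ_eq_add_bitd, mod_two_pow_succ_eq_add_bitd]
    ring
  rw [carry, hsplit, pow_succ, ← Nat.div_div_eq_div_mul,
    Nat.add_mul_div_left _ _ (Nat.two_pow_pos i), add_comm, carry]

lemma add_div_two_pow (x y i : ℕ) :
    (x + y) / 2 ^ i = x / 2 ^ i + y / 2 ^ i + carry x y i := by
  have hsplit : x % 2 ^ i + y % 2 ^ i + 2 ^ i * (x / 2 ^ i + y / 2 ^ i) = x + y := by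
    linear_combination Nat.mod_add_div x (2 ^ i) + Nat.mod_add_div y (2 ^ i)
  rw [← hsplit, Nat.add_mul_div_left _ _ (Nat.two_pow_pos i), add_comm, carry]

lemma bitd_add (x y i : ℕ) : bitd (x + y) i = (bitd x i + bitd y i + carry x y i) % 2 := by
  simp only [bitd, add_div_two_pow, Nat.add_mod, Nat.mod_mod]

lemma tcarry_lt_two (m x y i : ℕ) : tcarry m x y i < 2 := by
  unfold tcarry
  split_ifs <;> decide

lemma tcarry_eq_one_iff {m x y i : ℕ} :
    tcarry m x y i = 1 ↔ ∃ j, i - m ≤ j ∧ j < i ∧ bitd x j = 1 ∧ bitd y j = 1 ∧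
      ∀ k, j < k → k < i → bitd x k + bitd y k = 1 := by
  simp [tcarry]

lemma tcarry_zero_right (m x y : ℕ) : tcarry m x y 0 = 0 := by
  simp [tcarry]

lemma tcarry_succ_succ_eq_one_iff {m x y i : ℕ} :
    tcarry (m + 1) x y (i + 1) = 1 ↔
      (bitd x i = 1 ∧ bitd y i = 1) ∨ (bitd x i + bitd y i = 1 ∧ tcarry m x y i = 1) := by
  simp only [tcarry_eq_one_iff, Nat.add_sub_add_right]
  constructor
  · rintro ⟨j, hwindow, hji, hxj, hyj, hprop⟩
    rcases Nat.lt_succ_iff_lt_or_eq.mp hji with hlt | rfl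
    · exact .inr ⟨hprop i hlt i.lt_succ_self, j, hwindow, hlt, hxj, hyj,
        fun k hjk hki => hprop k hjk (hki.trans i.lt_succ_self)⟩
    · exact .inl ⟨hxj, hyj⟩
  · rintro (⟨hxi, hyi⟩ | ⟨hi, j, hwindow, hji, hxj, hyj, hprop⟩)
    · exact ⟨i, i.sub_le m, i.lt_succ_self, hxi, hyi, fun k hik hki => by omega⟩
    · refine ⟨j, hwindow, hji.trans i.lt_succ_self, hxj, hyj, fun k hjk hki => ?_⟩
      rcases Nat.lt_succ_iff_lt_or_eq.mp hki with hlt | rfl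
      · exact hprop k hjk hlt
      · exact hi

lemma tcarry_succ_succ (m x y i : ℕ) :
    tcarry (m + 1) x y (i + 1) = (bitd x i + bitd y i + tcarry m x y i) / 2 := by
  have hx := bitd_lt_two x i
  have hy := bitd_lt_two y i
  have hcarry := tcarry_lt_two m x y i
  have hcarry_succ := tcarry_lt_two (m + 1) x y (i + 1)
  have hiff := tcarry_succ_succ_eq_one_iff (m := m) (x := x) (y := y) (i := i)
  omega

lemma tcarry_eq_carry {m i : ℕ} (x y : ℕ) (him : i ≤ m) : tcarry m x y i = carry x y i := by
  induction i generalizing m with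
  | zero => rw [tcarry_zero_right, carry_zero]
  | succ i ih =>
    obtain ⟨m, rfl⟩ := Nat.exists_eq_add_of_le' him
    rw [← Nat.add_assoc, tcarry_succ_succ, carry_succ, ih (Nat.le_add_left i m)]

theorem tadd_pred_eq_add_general {N m : ℕ} (x y : ℕ) (hm : N ≤ m + 1) :
    tadd N m x y = (x + y) % 2 ^ N := by
  calc tadd N m x y
      = ∑ i ∈ Finset.range N, bitd (x + y) i * 2 ^ i := by
        refine Finset.sum_congr rfl fun i hi => ?_
        have him : i ≤ m := Nat.le_of_lt_succ ((Finset.mem_range.mp hi).trans_le hm)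
        rw [tcarry_eq_carry x y him, bitd_add]
    _ = (x + y) % 2 ^ N := sum_bitd_mul_two_pow (x + y) N

/-- `(N-1)`-truncated addition coincides with ordinary addition mod `2^N`. -/
theorem tadd_pred_eq_add (N x y : ℕ) (hN : 1 ≤ N) (hx : x < 2 ^ N) (hy : y < 2 ^ N) :
    tadd N (N - 1) x y = (x + y) % 2 ^ N :=
  tadd_pred_eq_add_general x y le_tsub_add
end

section
/- Fix m ≥ 1 and j ≥ m + 1, and for each length ℓ let A_m(ℓ) denote the number of pairs of binary strings (x, y) of length ℓ whose digit-sum sequence avoids the pattern P(m) (a 2 directly followed, in increasing index order, by m consecutive 1's). Then for each i with 0 ≤ i ≤ j − 1 − m, the number of pairs (x, y) of binary strings of length j such that: the rightmost i positions (positions 0 through i−1) have digit sums avoiding P(m), position i has digit sum 2 (i.e. x_i = y_i = 1), and positions i+1 through i+m each have digit sum 1, equals 2^m · 4^{j−1−m−i} · A_m(i). -/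
/-- The digit-sum sequence of the pair of length-`ℓ` binary strings `(x,y)` avoids the
pattern `P(m)`: there is no index `j` (with the whole pattern inside positions
`0, …, ℓ - 1`) where the digit sum is `2` directly followed by `m` consecutive
digit sums equal to `1`. -/
def avoids (m ℓ x y : ℕ) : Prop :=
  ∀ j, j + m + 1 ≤ ℓ →
    ¬(bitd x j + bitd y j = 2 ∧ ∀ k, j < k → k ≤ j + m → bitd x k + bitd y k = 1)

open Classical in
/-- `A m ℓ` counts the pairs of length-`ℓ` binary strings whose digit-sum
sequence avoids the pattern `P(m)`. -/
noncomputable def A (m ℓ : ℕ) : ℕ :=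
  ((Finset.range (2 ^ ℓ) ×ˢ Finset.range (2 ^ ℓ)).filter fun p => avoids m ℓ p.1 p.2).card

lemma bitd_mod_two_pow {k n : ℕ} (hk : k < n) (x : ℕ) : bitd (x % 2 ^ n) k = bitd x k := by
  simp [bitd, ← Nat.toNat_testBit, Nat.testBit_mod_two_pow, hk]

lemma bitd_div_two_pow (x n k : ℕ) : bitd (x / 2 ^ n) k = bitd x (n + k) := by
  rw [bitd, bitd, Nat.div_div_eq_div_mul, pow_add]

lemma avoids_mod_two_pow (m ℓ x y : ℕ) :
    avoids m ℓ (x % 2 ^ ℓ) (y % 2 ^ ℓ) ↔ avoids m ℓ x y := by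
  refine forall₂_congr fun j hj => not_congr (and_congr ?_ (forall₃_congr fun k _ hk => ?_)) <;>
    rw [bitd_mod_two_pow (by omega), bitd_mod_two_pow (by omega)]

/-- The pattern `P(m)` occurs in the digit sums of `x` and `y` with its digit sum `2` at position
`i`; that digit sum is encoded by both digits being `1`. -/
def PatternAt (m i x y : ℕ) : Prop :=
  bitd x i = 1 ∧ bitd y i = 1 ∧ ∀ k, i < k → k ≤ i + m → bitd x k + bitd y k = 1

lemma patternAt_mod_two_pow {m i n : ℕ} (h : i + m < n) (x y : ℕ) :
    PatternAt m i (x % 2 ^ n) (y % 2 ^ n) ↔ PatternAt m i x y := by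
  refine and_congr ?_ (and_congr ?_ (forall₃_congr fun k _ hk => ?_))
  · rw [bitd_mod_two_pow (by omega)]
  · rw [bitd_mod_two_pow (by omega)]
  · rw [bitd_mod_two_pow (by omega), bitd_mod_two_pow (by omega)]

lemma patternAt_div_two_pow (m i n x y : ℕ) :
    PatternAt m i (x / 2 ^ n) (y / 2 ^ n) ↔ PatternAt m (n + i) x y := by
  simp only [PatternAt, bitd_div_two_pow]
  refine and_congr_right fun _ => and_congr_right fun _ =>
    ⟨fun h k hk hk' => ?_, fun h k hk hk' => h (n + k) (by omega) (by omega)⟩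
  obtain ⟨t, rfl⟩ := Nat.exists_eq_add_of_le (show n ≤ k by omega)
  exact h t (by omega) (by omega)

lemma patternAt_succ (m i x y : ℕ) :
    PatternAt (m + 1) i x y ↔
      PatternAt m i x y ∧ bitd x (i + m + 1) + bitd y (i + m + 1) = 1 := by
  constructor
  · rintro ⟨hx, hy, hones⟩
    exact ⟨⟨hx, hy, fun k hk hk' => hones k hk (by omega)⟩, hones _ (by omega) (by omega)⟩
  · rintro ⟨⟨hx, hy, hones⟩, hlast⟩
    refine ⟨hx, hy, fun k hk hk' => ?_⟩
    obtain hk' | rfl : k ≤ i + m ∨ k = i + m + 1 := by omega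
    · exact hones k hk hk'
    · exact hlast

open Classical in
/-- The number of pairs of natural numbers below `N` satisfying `P`; for `N = 2 ^ n` these are the
pairs of binary strings of length `n`. Letting `N` be arbitrary makes cutting strings into pieces a
matter of factoring `N`. -/
noncomputable def pairCount (N : ℕ) (P : ℕ → ℕ → Prop) : ℕ :=
  ((Finset.range N ×ˢ Finset.range N).filter fun p => P p.1 p.2).card

lemma pairCount_eq_card (N : ℕ) (P : ℕ → ℕ → Prop) [DecidablePred fun p : ℕ × ℕ => P p.1 p.2] :
    pairCount N P = ((Finset.range N ×ˢ Finset.range N).filter fun p => P p.1 p.2).card := by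
  rw [pairCount, Finset.filter_congr_decidable]

lemma pairCount_congr {N : ℕ} {P Q : ℕ → ℕ → Prop} (h : ∀ x y, P x y ↔ Q x y) :
    pairCount N P = pairCount N Q := by
  obtain rfl : P = Q := funext₂ fun x y => propext (h x y)
  rfl

lemma pairCount_true (N : ℕ) : pairCount N (fun _ _ => True) = N ^ 2 := by
  simp [pairCount, sq]

lemma pairCount_mul (a b : ℕ) (P Q : ℕ → ℕ → Prop) :
    pairCount (a * b) (fun x y => P (x % a) (y % a) ∧ Q (x / a) (y / a)) =
      pairCount a P * pairCount b Q := by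
  classical
  obtain rfl | ha := a.eq_zero_or_pos
  · simp [pairCount]
  simp only [pairCount, ← Finset.card_product]
  refine Finset.card_nbij' (fun p => ((p.1 % a, p.2 % a), (p.1 / a, p.2 / a)))
    (fun q => (q.1.1 + a * q.2.1, q.1.2 + a * q.2.2)) ?_ ?_ ?_ ?_
  · rintro ⟨x, y⟩ h
    simp_all [Nat.mod_lt, Nat.div_lt_of_lt_mul]
  · have add_mul_lt {r q : ℕ} (hr : r < a) (hq : q < b) : r + a * q < a * b := by nlinarith
    rintro ⟨⟨r, s⟩, ⟨u, v⟩⟩ h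
    simp_all only [Finset.coe_product, Finset.coe_filter, Finset.mem_product, Finset.mem_range,
      Set.mem_prod, Set.mem_ofPred_eq, Nat.add_mul_mod_self_left, Nat.add_mul_div_left,
      Nat.mod_eq_of_lt, Nat.div_eq_of_lt, zero_add, and_self]
  · rintro ⟨x, y⟩ -
    simp [Nat.mod_add_div]
  · rintro ⟨⟨r, s⟩, ⟨u, v⟩⟩ h
    simp_all [Nat.add_mul_div_left, Nat.mod_eq_of_lt, Nat.div_eq_of_lt]

lemma pairCount_patternAt_zero (m : ℕ) : pairCount (2 ^ (m + 1)) (PatternAt m 0) = 2 ^ m := by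
  induction m with
  | zero =>
    have both_one (x y : ℕ) : PatternAt 0 0 x y ↔ x % 2 = 1 ∧ y % 2 = 1 := by
      simp only [PatternAt, bitd, pow_zero, Nat.div_one]
      exact and_congr_right fun _ => and_iff_left fun k hk hk' => by omega
    rw [pairCount_congr both_one, pairCount_eq_card]
    decide
  | succ m ih =>
    have split_top (x y : ℕ) : PatternAt (m + 1) 0 x y ↔
        PatternAt m 0 (x % 2 ^ (m + 1)) (y % 2 ^ (m + 1)) ∧
          x / 2 ^ (m + 1) % 2 + y / 2 ^ (m + 1) % 2 = 1 := by
      rw [patternAt_succ, patternAt_mod_two_pow (by omega), zero_add, bitd, bitd]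
    have two_choices : pairCount 2 (fun a b => a % 2 + b % 2 = 1) = 2 := by
      rw [pairCount_eq_card]
      decide
    rw [pairCount_congr split_top, pow_succ,
      pairCount_mul _ _ _ fun a b => a % 2 + b % 2 = 1, ih, two_choices, pow_succ]

lemma pairCount_and_patternAt (P : ℕ → ℕ → Prop) (m i d : ℕ) :
    pairCount (2 ^ (i + m + 1 + d))
        (fun x y => P (x % 2 ^ i) (y % 2 ^ i) ∧ PatternAt m i x y) =
      2 ^ m * 4 ^ d * pairCount (2 ^ i) P := by
  have cut (x y : ℕ) : PatternAt m i x y ↔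
      PatternAt m 0 (x / 2 ^ i % 2 ^ (m + 1)) (y / 2 ^ i % 2 ^ (m + 1)) ∧ True := by
    rw [patternAt_mod_two_pow (by omega), patternAt_div_two_pow, add_zero, and_true]
  calc pairCount (2 ^ (i + m + 1 + d)) (fun x y => P (x % 2 ^ i) (y % 2 ^ i) ∧ PatternAt m i x y)
      = pairCount (2 ^ i * (2 ^ (m + 1) * 2 ^ d)) (fun x y => P (x % 2 ^ i) (y % 2 ^ i) ∧
          PatternAt m 0 (x / 2 ^ i % 2 ^ (m + 1)) (y / 2 ^ i % 2 ^ (m + 1)) ∧ True) := by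
        rw [← pow_add, ← pow_add, ← add_assoc, ← add_assoc]
        exact pairCount_congr fun x y => and_congr_right fun _ => cut x y
    _ = pairCount (2 ^ i) P *
          (pairCount (2 ^ (m + 1)) (PatternAt m 0) * pairCount (2 ^ d) fun _ _ => True) := by
        rw [pairCount_mul _ _ P fun u v =>
          PatternAt m 0 (u % 2 ^ (m + 1)) (v % 2 ^ (m + 1)) ∧ True,
          pairCount_mul _ _ _ fun _ _ => True]
    _ = 2 ^ m * 4 ^ d * pairCount (2 ^ i) P := by
        rw [pairCount_patternAt_zero, pairCount_true, pow_right_comm, mul_comm]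
        norm_num

open Classical in
/-- for `m ≥ 1`, `j ≥ m + 1` and `0 ≤ i ≤ j - 1 - m`, the number of
pairs of length-`j` binary strings whose rightmost `i` positions (positions
`0, …, i-1`) avoid `P(m)`, whose position `i` has digit sum `2`, and whose
positions `i+1, …, i+m` each have digit sum `1`, equals
`2^m · 4^(j-1-m-i) · A_m(i)`. -/
theorem card_rightmost_occurrence (m j i : ℕ) (hm : 1 ≤ m) (hj : m + 1 ≤ j)
    (hi : i + m + 1 ≤ j) :
    ((Finset.range (2 ^ j) ×ˢ Finset.range (2 ^ j)).filter fun p =>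
        avoids m i p.1 p.2 ∧ bitd p.1 i = 1 ∧ bitd p.2 i = 1 ∧
          ∀ k, i < k → k ≤ i + m → bitd p.1 k + bitd p.2 k = 1).card
      = 2 ^ m * 4 ^ (j - (i + m + 1)) * A m i := by
  obtain ⟨d, rfl⟩ := Nat.exists_eq_add_of_le hi
  calc _ = pairCount (2 ^ (i + m + 1 + d)) (fun x y => avoids m i x y ∧ PatternAt m i x y) :=
        by unfold PatternAt; rw [pairCount_eq_card]
    _ = pairCount (2 ^ (i + m + 1 + d))
          (fun x y => avoids m i (x % 2 ^ i) (y % 2 ^ i) ∧ PatternAt m i x y) := by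
        simp only [avoids_mod_two_pow]
    _ = 2 ^ m * 4 ^ d * A m i := pairCount_and_patternAt (avoids m i) m i d
    _ = 2 ^ m * 4 ^ (i + m + 1 + d - (i + m + 1)) * A m i := by rw [Nat.add_sub_cancel_left]
end

section
/- For all N-bit binary numbers x and y, all m ≥ 0, and every position 0 ≤ i ≤ N−1, the i-th bit of the m-truncated sum x +_m y, viewed as an element of the field F_2, equals (x_i + y_i) + Σ_{k=1}^{min(i,m)} (x_{i−k} y_{i−k}) ∏_{j=i−k+1}^{i−1} (x_j + y_j), where all additions and multiplications are performed in F_2 (the 2-element field) and the digits x_j, y_j ∈ {0,1} are regarded as elements of F_2. -/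
theorem sum_mul_pow_div_pow_mod {b N i : ℕ} {f : ℕ → ℕ} (hf : ∀ j < N, f j < b) (hi : i < N) :
    (∑ j ∈ Finset.range N, f j * b ^ j) / b ^ i % b = f i := by
  let digits : Fin N → Fin b := fun j => ⟨f j, hf j j.isLt⟩
  have hsum : (finFunctionFinEquiv digits : ℕ) = ∑ j ∈ Finset.range N, f j * b ^ j := by
    rw [finFunctionFinEquiv_apply, Finset.sum_range]
  have hdigit := congrArg Fin.val
    (congrFun (finFunctionFinEquiv.symm_apply_apply digits) ⟨i, hi⟩)
  rwa [finFunctionFinEquiv_symm_apply_val, hsum] at hdigit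

theorem exists_mem_Icc_sub_iff {p : ℕ → Prop} {m i : ℕ} :
    (∃ k ∈ Finset.Icc 1 (min i m), p (i - k)) ↔ ∃ j, i - m ≤ j ∧ j < i ∧ p j := by
  constructor
  · rintro ⟨k, hk, hp⟩
    rw [Finset.mem_Icc] at hk
    exact ⟨i - k, by omega, by omega, hp⟩
  · rintro ⟨j, hmj, hji, hp⟩
    refine ⟨i - j, Finset.mem_Icc.mpr (by omega), ?_⟩
    rwa [Nat.sub_sub_self hji.le]

theorem bitd_tadd {N i : ℕ} (m x y : ℕ) (hi : i < N) :
    bitd (tadd N m x y) i = (bitd x i + bitd y i + tcarry m x y i) % 2 :=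
  sum_mul_pow_div_pow_mod (f := fun j => (bitd x j + bitd y j + tcarry m x y j) % 2)
    (fun _ _ => Nat.mod_lt _ two_pos) hi

theorem bitd_eq_zero_or_one (x i : ℕ) : bitd x i = 0 ∨ bitd x i = 1 :=
  Nat.mod_two_eq_zero_or_one _

theorem cast_bitd_mul_cast_bitd {R : Type*} [NonAssocSemiring R] (x y j : ℕ) :
    (bitd x j : R) * (bitd y j : R) = if bitd x j = 1 ∧ bitd y j = 1 then 1 else 0 := by
  rcases bitd_eq_zero_or_one x j with hx | hx <;>
    rcases bitd_eq_zero_or_one y j with hy | hy <;> simp [hx, hy]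

theorem cast_bitd_add_cast_bitd {R : Type*} [AddMonoidWithOne R] [CharP R 2] (x y j : ℕ) :
    (bitd x j : R) + (bitd y j : R) = if bitd x j + bitd y j = 1 then 1 else 0 := by
  rw [← Nat.cast_add, CharP.cast_eq_mod R 2]
  rcases bitd_eq_zero_or_one x j with hx | hx <;>
    rcases bitd_eq_zero_or_one y j with hy | hy <;> simp [hx, hy]

/-- The carry generated at position `j` reaches position `i`: both digits are `1` at `j`, and
every position strictly between `j` and `i` propagates a carry. This is the condition on `j` in
`tcarry`, apart from its range `i - m ≤ j < i`, which is kept separate so that the predicate does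
not depend on `m`. -/
def CarryReaches (x y j i : ℕ) : Prop :=
  bitd x j = 1 ∧ bitd y j = 1 ∧ ∀ k, j < k → k < i → bitd x k + bitd y k = 1

open Classical in
theorem tcarry_eq_ite (m x y i : ℕ) :
    tcarry m x y i = if ∃ j, i - m ≤ j ∧ j < i ∧ CarryReaches x y j i then 1 else 0 :=
  rfl

theorem CarryReaches.source_unique {x y j j' i : ℕ} (h : CarryReaches x y j i)
    (h' : CarryReaches x y j' i) (hj : j < i) (hj' : j' < i) : j = j' := by
  obtain ⟨hx, hy, hprop⟩ := h
  obtain ⟨hx', hy', hprop'⟩ := h'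
  rcases lt_trichotomy j j' with hlt | rfl | hlt
  · have := hprop j' hlt hj'
    omega
  · rfl
  · have := hprop' j hlt hj
    omega

section CharTwo

variable {R : Type*} [CommSemiring R] [CharP R 2]

open Classical in
theorem carry_monomial_eq_ite (x y j i : ℕ) :
    ((bitd x j : R) * (bitd y j : R)) *
        ∏ k ∈ Finset.Icc (j + 1) (i - 1), ((bitd x k : R) + (bitd y k : R)) =
      if CarryReaches x y j i then 1 else 0 := by
  have hbetween : (∀ k ∈ Finset.Icc (j + 1) (i - 1), bitd x k + bitd y k = 1) ↔
      ∀ k, j < k → k < i → bitd x k + bitd y k = 1 := by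
    refine forall_congr' fun k => ?_
    rw [Finset.mem_Icc, ← and_imp]
    exact imp_congr_left (by omega)
  simp only [cast_bitd_mul_cast_bitd, cast_bitd_add_cast_bitd, Finset.prod_boole, hbetween,
    ite_zero_mul_ite_zero, one_mul]
  exact if_congr and_assoc rfl rfl

theorem cast_tcarry (m x y i : ℕ) :
    (tcarry m x y i : R) =
      ∑ k ∈ Finset.Icc 1 (min i m),
        ((bitd x (i - k) : R) * (bitd y (i - k) : R)) *
          ∏ j ∈ Finset.Icc (i - k + 1) (i - 1), ((bitd x j : R) + (bitd y j : R)) := by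
  classical
  have hunique : ∀ k ∈ Finset.Icc 1 (min i m), ∀ k' ∈ Finset.Icc 1 (min i m),
      CarryReaches x y (i - k) i → CarryReaches x y (i - k') i → k = k' := by
    intro k hk k' hk' h h'
    rw [Finset.mem_Icc] at hk hk'
    have := h.source_unique h' (by omega) (by omega)
    omega
  simp only [carry_monomial_eq_ite]
  rw [Finset.sum_ite_zero _ _ hunique, tcarry_eq_ite, Nat.cast_ite, Nat.cast_one, Nat.cast_zero]
  exact if_congr exists_mem_Icc_sub_iff.symm rfl rfl

theorem bit_tadd_formula_general (N m x y i : ℕ) (hi : i < N) :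
    (bitd (tadd N m x y) i : R) =
      ((bitd x i : R) + (bitd y i : R)) +
        ∑ k ∈ Finset.Icc 1 (min i m),
          ((bitd x (i - k) : R) * (bitd y (i - k) : R)) *
            ∏ j ∈ Finset.Icc (i - k + 1) (i - 1), ((bitd x j : R) + (bitd y j : R)) := by
  rw [bitd_tadd m x y hi, ← CharP.cast_eq_mod R 2, Nat.cast_add, Nat.cast_add, cast_tcarry]

end CharTwo

/-- the polynomial formula over `F_2 = ZMod 2` for bit `i` of the
`m`-truncated sum: it equals
`(x_i + y_i) + ∑_{k=1}^{min(i,m)} (x_{i-k} y_{i-k}) ∏_{j=i-k+1}^{i-1} (x_j + y_j)`. -/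
theorem bit_tadd_formula (N m x y i : ℕ) (hx : x < 2 ^ N) (hy : y < 2 ^ N) (hi : i < N) :
    (bitd (tadd N m x y) i : ZMod 2) =
      ((bitd x i : ZMod 2) + (bitd y i : ZMod 2)) +
        ∑ k ∈ Finset.Icc 1 (min i m),
          ((bitd x (i - k) : ZMod 2) * (bitd y (i - k) : ZMod 2)) *
            ∏ j ∈ Finset.Icc (i - k + 1) (i - 1),
              ((bitd x j : ZMod 2) + (bitd y j : ZMod 2)) :=
  bit_tadd_formula_general N m x y i hi
end

section
/- Fix integers m ≥ 1 and i ≥ 1. In the multivariate polynomial ring over F_2 with variables X_0, …, X_{N−1}, Y_0, …, Y_{N−1} (N > i), the polynomial encoding the i-th bit of m-truncated addition, namely P_i := (X_i + Y_i) + Σ_{k=1}^{min(i,m)} (X_{i−k} Y_{i−k}) ∏_{j=i−k+1}^{i−1} (X_j + Y_j), has total degree exactly min(i, m) + 1. -/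
/-!
The carry generated at bit `i - k` and propagated up to bit `i` is a product of `k + 1` linear
forms, none of them zero, so over a domain it is homogeneous of degree exactly `k + 1`. Hence the
carries contribute one summand in each of the degrees `2, …, min i m + 1`, on top of the linear form
`X_i + Y_i`, and nothing can cancel the summand of largest degree.
-/

open MvPolynomial in
/-- The polynomial over `F_2 = ZMod 2` encoding bit `i` of `m`-truncated addition;
the variables `X_0, X_1, …` are indexed by `Sum.inl` and the variables
`Y_0, Y_1, …` by `Sum.inr`. -/
noncomputable def truncAddPoly (m i : ℕ) : MvPolynomial (ℕ ⊕ ℕ) (ZMod 2) :=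
  (X (Sum.inl i) + X (Sum.inr i)) +
    ∑ k ∈ Finset.Icc 1 (min i m),
      X (Sum.inl (i - k)) * X (Sum.inr (i - k)) *
        ∏ j ∈ Finset.Icc (i - k + 1) (i - 1), (X (Sum.inl j) + X (Sum.inr j))

section Carry

open MvPolynomial

section Linear

variable {σ : Type*} (R : Type*) [CommSemiring R]

lemma isHomogeneous_X_add_X (a b : σ) : (X a + X b : MvPolynomial σ R).IsHomogeneous 1 :=
  (isHomogeneous_X R a).add (isHomogeneous_X R b)

variable [Nontrivial R] {a b : σ}

lemma X_add_X_ne_zero (hab : a ≠ b) : (X a + X b : MvPolynomial σ R) ≠ 0 := by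
  classical
  intro h
  have hcoeff := congrArg (coeff (Finsupp.single a 1)) h
  simp [coeff_X, Finsupp.single_left_inj, hab.symm] at hcoeff

lemma totalDegree_X_add_X (hab : a ≠ b) : (X a + X b : MvPolynomial σ R).totalDegree = 1 :=
  (isHomogeneous_X_add_X R a b).totalDegree (X_add_X_ne_zero R hab)

end Linear

variable (R : Type*) [CommSemiring R]

/-- The carry `X_j Y_j ∏_{l=j+1}^{i-1} (X_l + Y_l)` generated at bit `j` and propagated to bit `i`,
with `X_l` and `Y_l` indexed as in `truncAddPoly`. It has this meaning only for `j < i`. -/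
noncomputable def carryTerm (j i : ℕ) : MvPolynomial (ℕ ⊕ ℕ) R :=
  X (Sum.inl j) * X (Sum.inr j) *
    ∏ l ∈ Finset.Icc (j + 1) (i - 1), (X (Sum.inl l) + X (Sum.inr l))

lemma truncAddPoly_eq_add_sum_carryTerm (m i : ℕ) :
    truncAddPoly m i = X (Sum.inl i) + X (Sum.inr i) +
      ∑ k ∈ Finset.Icc 1 (min i m), carryTerm (ZMod 2) (i - k) i :=
  rfl

variable {i j n : ℕ}

lemma isHomogeneous_carryTerm (hji : j < i) : (carryTerm R j i).IsHomogeneous (i - j + 1) := by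
  have hprod : (carryTerm R j i).IsHomogeneous (1 + 1 + ∑ _l ∈ Finset.Icc (j + 1) (i - 1), 1) :=
    ((isHomogeneous_X R _).mul (isHomogeneous_X R _)).mul
      (.prod _ _ _ fun l _ => isHomogeneous_X_add_X R (Sum.inl l) (Sum.inr l))
  convert hprod using 1
  rw [Finset.sum_const, Nat.card_Icc, smul_eq_mul]
  omega

variable [Nontrivial R] [NoZeroDivisors R]

lemma carryTerm_ne_zero (j i : ℕ) : carryTerm R j i ≠ 0 :=
  mul_ne_zero (mul_ne_zero (X_ne_zero _) (X_ne_zero _))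
    (Finset.prod_ne_zero_iff.mpr fun _ _ => X_add_X_ne_zero R Sum.inl_ne_inr)

lemma totalDegree_carryTerm (hji : j < i) : (carryTerm R j i).totalDegree = i - j + 1 :=
  (isHomogeneous_carryTerm R hji).totalDegree (carryTerm_ne_zero R j i)

lemma totalDegree_add_sum_carryTerm (hn : n ≤ i) :
    (X (Sum.inl i) + X (Sum.inr i) +
      ∑ k ∈ Finset.Icc 1 n, carryTerm R (i - k) i).totalDegree = n + 1 := by
  induction n with
  | zero => simpa using totalDegree_X_add_X R (Sum.inl_ne_inr (a := i) (b := i))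
  | succ n ih =>
    have hlow := ih (Nat.le_of_succ_le hn)
    have htop : (carryTerm R (i - (n + 1)) i).totalDegree = n + 1 + 1 := by
      rw [totalDegree_carryTerm R (by omega), Nat.sub_sub_self hn]
    rw [Finset.sum_Icc_succ_top (by omega), ← add_assoc,
      totalDegree_add_eq_right_of_totalDegree_lt (by omega), htop]

end Carry

/-- for `m ≥ 1` and `1 ≤ i < N`, the polynomial encoding bit `i` of
`m`-truncated addition has total degree exactly `min(i, m) + 1`. -/
theorem truncAddPoly_totalDegree (N m i : ℕ) (hm : 1 ≤ m) (hi : 1 ≤ i) (hiN : i < N) :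
    (truncAddPoly m i).totalDegree = min i m + 1 := by
  rw [truncAddPoly_eq_add_sum_carryTerm]
  exact totalDegree_add_sum_carryTerm (ZMod 2) (min_le_left i m)
end
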